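/- arXiv:1503.07129 — 2 statements merged into one kernel-verified Lean document; each statement's English description precedes it below -/
import Mathlib

section
/- Let λ ∈ ℝ with λ < −1 and let x ∈ ℝ with x ≤ 1/λ. Then the even iterates diverge to −∞ and the odd iterates diverge to +∞: f_λ^{2k}(x) → −∞ and f_λ^{2k+1}(x) → +∞ as k → ∞. -/
open Filter

/-!
Since `lam < -1`, a value at least an integer `n ≥ 1` is sent strictly below `-n`, and the integer
reached is sent to at least its opposite. So two steps raise an integer lower bound by at least
one. The condition `x ≤ 1 / lam` says that the first iterate is at least `1`.
-/

-- `tendsto_natCast_atTop_atTop` does not apply: a `FloorRing` need not be `Archimedean`, an example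
-- being `ℤ[ε]` with `ε` a positive infinitesimal.
theorem tendsto_natCast_atTop_of_floorSemiring {S : Type*} [Semiring S] [LinearOrder S]
    [IsOrderedRing S] [FloorSemiring S] : Tendsto ((↑) : ℕ → S) atTop atTop :=
  tendsto_atTop_atTop_of_monotone Nat.mono_cast fun y => ⟨⌈y⌉₊, Nat.le_ceil y⟩

section FloorMul

variable {R : Type*} [Ring R] [LinearOrder R] [FloorRing R]

/-- The map `f_a : y ↦ ⌊a * y⌋`, with values cast back to `R` so that it can be iterated. -/
def floorMul (a y : R) : R := ⌊a * y⌋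

variable [IsStrictOrderedRing R] {a y : R}

theorem floor_mul_lt_neg {n : ℤ} (ha : a < -1) (hn : 0 < n) (hy : (n : R) ≤ y) :
    ⌊a * y⌋ < -n := by
  have hy_pos : 0 < y := (Int.cast_pos.mpr hn).trans_le hy
  rw [Int.floor_lt]
  calc
    a * y < -1 * y := mul_lt_mul_of_pos_right ha hy_pos
    _ = -y := neg_one_mul y
    _ ≤ ((-n : ℤ) : R) := by simpa using hy

theorem neg_le_floor_mul_intCast {m : ℤ} (ha : a ≤ -1) (hm : m ≤ 0) : -m ≤ ⌊a * m⌋ := by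
  rw [Int.le_floor]
  simpa using mul_le_mul_of_nonpos_right ha (Int.cast_nonpos.mpr hm)

theorem lt_floor_mul_floor_mul {n : ℤ} (ha : a < -1) (hn : 0 < n) (hy : (n : R) ≤ y) :
    n < ⌊a * ⌊a * y⌋⌋ := by
  have hlt : ⌊a * y⌋ < -n := floor_mul_lt_neg ha hn hy
  have hle : -⌊a * y⌋ ≤ ⌊a * ⌊a * y⌋⌋ := neg_le_floor_mul_intCast ha.le (by lia)
  lia

theorem add_natCast_le_floorMul_iterate {n : ℤ} (ha : a < -1) (hn : 0 < n) (hy : (n : R) ≤ y)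
    (k : ℕ) : ((n + k : ℤ) : R) ≤ (floorMul a)^[2 * k] y := by
  induction k with
  | zero => simpa using hy
  | succ k ih =>
    have hlt : n + k < ⌊a * ⌊a * (floorMul a)^[2 * k] y⌋⌋ :=
      lt_floor_mul_floor_mul ha (by lia) ih
    have hle : n + (k + 1 : ℕ) ≤ ⌊a * ⌊a * (floorMul a)^[2 * k] y⌋⌋ := by lia
    rw [mul_add_one, Function.iterate_succ_apply', Function.iterate_succ_apply']
    exact Int.cast_le.mpr hle

theorem floorMul_le_neg (ha : a ≤ -1) (hy : 0 ≤ y) : floorMul a y ≤ -y :=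
  calc
    floorMul a y ≤ a * y := Int.floor_le (a * y)
    _ ≤ -1 * y := mul_le_mul_of_nonneg_right ha hy
    _ = -y := neg_one_mul y

theorem tendsto_floorMul_atTop_atBot (ha : a ≤ -1) : Tendsto (floorMul a) atTop atBot :=
  tendsto_atBot_mono' _ ((eventually_ge_atTop 0).mono fun _ hy => floorMul_le_neg ha hy)
    tendsto_neg_atTop_atBot

theorem tendsto_floorMul_iterate_even (ha : a < -1) (hy : 1 ≤ y) :
    Tendsto (fun k : ℕ => (floorMul a)^[2 * k] y) atTop atTop := by
  have hle (k : ℕ) : (k : R) ≤ (floorMul a)^[2 * k] y :=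
    calc
      (k : R) ≤ ((1 + k : ℤ) : R) := by simp
      _ ≤ (floorMul a)^[2 * k] y :=
        add_natCast_le_floorMul_iterate ha one_pos (by simpa using hy) k
  exact tendsto_atTop_mono hle tendsto_natCast_atTop_of_floorSemiring

theorem tendsto_floorMul_iterate_odd (ha : a < -1) (hy : 1 ≤ y) :
    Tendsto (fun k : ℕ => (floorMul a)^[2 * k + 1] y) atTop atBot := by
  simp only [Function.iterate_succ_apply']
  exact (tendsto_floorMul_atTop_atBot ha.le).comp (tendsto_floorMul_iterate_even ha hy)

theorem one_le_floorMul (h : 1 ≤ a * y) : 1 ≤ floorMul a y := by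
  have hfloor : 1 ≤ ⌊a * y⌋ := Int.le_floor.mpr (by simpa using h)
  unfold floorMul
  exact_mod_cast hfloor

theorem floor_lambda_lt_neg_one_neg_orbit_general {x : R} (ha : a < -1) (hx : 1 ≤ a * x) :
    Tendsto (fun k : ℕ => (fun y : R => (⌊a * y⌋ : R))^[2 * k] x) atTop atBot ∧
    Tendsto (fun k : ℕ => (fun y : R => (⌊a * y⌋ : R))^[2 * k + 1] x) atTop atTop := by
  have hfx : 1 ≤ floorMul a x := one_le_floorMul hx
  constructor
  · rw [← tendsto_add_atTop_iff_nat 1]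
    exact tendsto_floorMul_iterate_odd ha hfx
  · exact tendsto_floorMul_iterate_even ha hfx

end FloorMul

/-- For λ < -1 and x ≤ 1/λ, the even iterates of f_λ(x) = ⌊λx⌋ tend to -∞
and the odd iterates tend to +∞. -/
theorem floor_lambda_lt_neg_one_neg_orbit (lam : ℝ) (hlam : lam < -1)
    (x : ℝ) (hx : x ≤ 1 / lam) :
    Tendsto (fun k : ℕ => (fun y : ℝ => (⌊lam * y⌋ : ℝ))^[2 * k] x) atTop atBot ∧
    Tendsto (fun k : ℕ => (fun y : ℝ => (⌊lam * y⌋ : ℝ))^[2 * k + 1] x) atTop atTop := by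
  have hlam_neg : lam < 0 := hlam.trans neg_one_lt_zero
  exact floor_lambda_lt_neg_one_neg_orbit_general hlam
    (mul_comm x lam ▸ (le_div_iff_of_neg hlam_neg).mp hx)
end

section
/- Let m ∈ ℕ, m ≥ 1, and let λ ∈ ℝ satisfy (m−1)/m < λ ≤ m/(m+1). Let k be an integer with −m ≤ k ≤ −1, and let x ∈ ℝ with k/λ ≤ x < (k+1)/λ. Then f_λ(x) = k and f_λⁿ(x) = k for all n ≥ 1; in particular f_λⁿ(x) → k as n → ∞. -/
open Filter

/-!
The value `k` is taken by `⌊a * ·⌋` exactly on `[k / a, (k + 1) / a)`, so it suffices that `k` is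
itself a fixed point: then every orbit starting in that interval is constant from its first step
on. The integer `k` is fixed exactly when the displacement `a * k - k` lies in `[0, 1)`. For
`a ≤ 1` and `-m ≤ k ≤ 0` this displacement `(1 - a) * (-k)` is at most `(1 - a) * m`, and
`(1 - a) * m < 1` is a restatement of `(m - 1) / m < a`.
-/

section Iterate

open Function

variable {α : Type*} {f : α → α} {x y : α}

theorem iterate_eq_of_apply_eq_of_isFixedPt (hxy : f x = y) (hy : IsFixedPt f y) {n : ℕ}
    (hn : 1 ≤ n) : f^[n] x = y := by
  obtain ⟨n, rfl⟩ := Nat.exists_eq_add_of_le' hn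
  rw [iterate_succ_apply, hxy, hy.iterate n]

theorem tendsto_iterate_of_apply_eq_of_isFixedPt [TopologicalSpace α] (hxy : f x = y)
    (hy : IsFixedPt f y) : Tendsto (fun n : ℕ => f^[n] x) atTop (nhds y) :=
  tendsto_atTop_of_eventually_const fun _ => iterate_eq_of_apply_eq_of_isFixedPt hxy hy

end Iterate

section Ring

variable {R : Type*} [Ring R] [LinearOrder R] [FloorRing R] {a : R} {k : ℤ}

theorem floor_mul_intCast_eq_self_iff [IsOrderedAddMonoid R] :
    ⌊a * k⌋ = k ↔ 0 ≤ a * k - k ∧ a * k - k < 1 := by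
  rw [Int.floor_eq_iff, sub_nonneg, sub_lt_iff_lt_add']

theorem floor_mul_intCast_eq_self_of_one_sub_mul_lt_one [IsStrictOrderedRing R] {m : R}
    (ha : a ≤ 1) (ham : (1 - a) * m < 1) (hmk : -m ≤ k) (hk : k ≤ 0) : ⌊a * k⌋ = k := by
  have h_displacement : a * k - k = (1 - a) * (-k) := by noncomm_ring
  have h_one_sub : 0 ≤ 1 - a := sub_nonneg.2 ha
  have h_neg : (0 : R) ≤ -k := neg_nonneg.2 (Int.cast_nonpos.2 hk)
  rw [floor_mul_intCast_eq_self_iff, h_displacement]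
  refine ⟨mul_nonneg h_one_sub h_neg, ?_⟩
  calc (1 - a) * (-k) ≤ (1 - a) * m := mul_le_mul_of_nonneg_left (neg_le.1 hmk) h_one_sub
    _ < 1 := ham

end Ring

section Field

variable {K : Type*} [Field K] [LinearOrder K] [IsStrictOrderedRing K]

theorem sub_one_div_lt_iff_one_sub_mul_lt_one {a m : K} (hm : 0 < m) :
    (m - 1) / m < a ↔ (1 - a) * m < 1 := by
  rw [div_lt_iff₀ hm, sub_lt_comm, sub_mul, one_mul]

variable [FloorRing K] {a : K} {k : ℤ}

theorem floor_mul_eq_iff_mem_Ico (ha : 0 < a) {x : K} :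
    ⌊a * x⌋ = k ↔ x ∈ Set.Ico ((k : K) / a) ((k + 1) / a) := by
  rw [Int.floor_eq_iff, Set.mem_Ico, div_le_iff₀' ha, lt_div_iff₀' ha]

theorem floor_lambda_lt_one_basin_of_neg_fixed_point_general [TopologicalSpace K] {m : ℕ}
    (hm : 1 ≤ m) (hma : ((m : K) - 1) / m < a) (ha : a ≤ 1) (hmk : -(m : ℤ) ≤ k) (hk : k ≤ 0)
    {x : K} (hkx : (k : K) / a ≤ x) (hxk : x < ((k : K) + 1) / a) :
    ⌊a * x⌋ = k ∧
    (∀ n : ℕ, 1 ≤ n → (fun y : K => (⌊a * y⌋ : K))^[n] x = (k : K)) ∧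
    Tendsto (fun n : ℕ => (fun y : K => (⌊a * y⌋ : K))^[n] x) atTop (nhds (k : K)) := by
  have hm_one : (1 : K) ≤ m := Nat.one_le_cast.2 hm
  have hm_pos : (0 : K) < m := zero_lt_one.trans_le hm_one
  have ha_pos : 0 < a := (div_nonneg (sub_nonneg.2 hm_one) hm_pos.le).trans_lt hma
  have h_floor : ⌊a * x⌋ = k := (floor_mul_eq_iff_mem_Ico ha_pos).2 ⟨hkx, hxk⟩
  have h_apply : (⌊a * x⌋ : K) = k := congrArg _ h_floor
  have h_fixed : Function.IsFixedPt (fun y : K => (⌊a * y⌋ : K)) k :=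
    congrArg _ (floor_mul_intCast_eq_self_of_one_sub_mul_lt_one ha
      ((sub_one_div_lt_iff_one_sub_mul_lt_one hm_pos).1 hma) (by exact_mod_cast hmk) hk)
  exact ⟨h_floor, fun _ => iterate_eq_of_apply_eq_of_isFixedPt h_apply h_fixed,
    tendsto_iterate_of_apply_eq_of_isFixedPt h_apply h_fixed⟩

end Field

/-- For (m-1)/m < λ ≤ m/(m+1), k an integer with -m ≤ k ≤ -1, and k/λ ≤ x < (k+1)/λ,
one has f_λ(x) = k, all iterates equal k, so the orbit converges to k. -/
theorem floor_lambda_lt_one_basin_of_neg_fixed_point (m : ℕ) (hm : 1 ≤ m) (lam : ℝ)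
    (h1 : ((m : ℝ) - 1) / m < lam) (h2 : lam ≤ (m : ℝ) / (m + 1))
    (k : ℤ) (hk1 : -(m : ℤ) ≤ k) (hk2 : k ≤ -1)
    (x : ℝ) (hx1 : (k : ℝ) / lam ≤ x) (hx2 : x < ((k : ℝ) + 1) / lam) :
    ⌊lam * x⌋ = k ∧
    (∀ n : ℕ, 1 ≤ n → (fun y : ℝ => (⌊lam * y⌋ : ℝ))^[n] x = (k : ℝ)) ∧
    Tendsto (fun n : ℕ => (fun y : ℝ => (⌊lam * y⌋ : ℝ))^[n] x) atTop (nhds (k : ℝ)) := by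
  have h_le_one : lam ≤ 1 := h2.trans (div_le_one_of_le₀ (by linarith) (by positivity))
  exact floor_lambda_lt_one_basin_of_neg_fixed_point_general hm h1 h_le_one hk1 (by lia) hx1 hx2
end
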